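/- Let S = k[x_0,…,x_n, y_0,…,y_m] be a bigraded polynomial ring with deg(x_i) = (1,0) and deg(y_j) = (0,1), let I = (f_1,…,f_{n+m}) be generated by n+m bihomogeneous forms with deg(f_i) = (d_i, e_i), and let V be the scheme in P^n × P^m defined by I. If V is a complete intersection (i.e. codim(V) = n+m), then deg(V) = Σ d_{i_1}⋯d_{i_n}·e_{j_1}⋯e_{j_m}, the sum being over all partitions of {1,…,n+m} into sets {i_1 < ⋯ < i_n} and {j_1 < ⋯ < j_m}. In particular, if d_i = d and e_i = e for all i, then deg(V) = C(n+m, n)·d^n·e^m. -/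

import Mathlib

open MvPolynomial Pointwise

noncomputable section

/-- The bigraded polynomial ring `S = k[x_0,…,x_n,y_0,…,y_m]`. -/
abbrev PolyS (k : Type) [Field k] (n m : ℕ) := MvPolynomial (Fin (n+1) ⊕ Fin (m+1)) k

/-- The bigrading weights: `deg x_i = (1,0)`, `deg y_j = (0,1)`. -/
def wt (n m : ℕ) : (Fin (n+1) ⊕ Fin (m+1)) → ℤ × ℤ :=
  Sum.elim (fun _ => (1,0)) (fun _ => (0,1))

/-- The bigraded piece of `S` in bidegree `γ`. -/
def grad (k : Type) [Field k] (n m : ℕ) (γ : ℤ × ℤ) : Submodule k (PolyS k n m) :=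
  weightedHomogeneousSubmodule k (wt n m) γ

/-- `B₁ = (x_0,…,x_n)`. -/
def Bone (k : Type) [Field k] (n m : ℕ) : Ideal (PolyS k n m) :=
  Ideal.span (Set.range fun i => X (Sum.inl i))

/-- `B₂ = (y_0,…,y_m)`. -/
def Btwo (k : Type) [Field k] (n m : ℕ) : Ideal (PolyS k n m) :=
  Ideal.span (Set.range fun j => X (Sum.inr j))

/-- `B = B₁ ⬝ B₂`, the irrelevant ideal of `ℙⁿ × ℙᵐ`. -/
def Birr (k : Type) [Field k] (n m : ℕ) : Ideal (PolyS k n m) := Bone k n m * Btwo k n m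

/-- The saturation `I : C^∞` of an ideal. -/
def satIdeal {k : Type} [Field k] {n m : ℕ} (I C : Ideal (PolyS k n m)) :
    Ideal (PolyS k n m) :=
  ⨆ t : ℕ, Submodule.colon I (C ^ t)

/-- The bidegree-`γ` piece of `S ⧸ I`, as a `k`-subspace. -/
def quotPiece (k : Type) [Field k] (n m : ℕ) (I : Ideal (PolyS k n m)) (γ : ℤ × ℤ) :
    Submodule k ((PolyS k n m) ⧸ I) :=
  (grad k n m γ).map (Ideal.Quotient.mkₐ k I).toLinearMap

/-- The bigraded Hilbert function of `S ⧸ I`. -/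
def HFq (k : Type) [Field k] (n m : ℕ) (I : Ideal (PolyS k n m)) (γ : ℤ × ℤ) : ℕ :=
  Module.finrank k (quotPiece k n m I γ)

/-- The bigraded Hilbert function of the subscheme of `ℙⁿ × ℙᵐ` defined by `I`, i.e. the
Hilbert function of `S ⧸ (I : B^∞)`. -/
def HFV (k : Type) [Field k] (n m : ℕ) (I : Ideal (PolyS k n m)) (γ : ℤ × ℤ) : ℕ :=
  HFq k n m (satIdeal I (Birr k n m)) γ

/-- `codim V = r`, encoded as: the cone over `V` (i.e. `Spec` of `S` modulo the saturation
of `I`) has Krull dimension `n + m + 2 - r`. -/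
def CodimEq (k : Type) [Field k] (n m : ℕ) (I : Ideal (PolyS k n m)) (r : ℕ) : Prop :=
  ringKrullDim ((PolyS k n m) ⧸ satIdeal I (Birr k n m)) = ((n + m + 2 - r : ℕ) : WithBot ℕ∞)


lemma ringKrullDim_le_of_integral_aux {A R : Type} [CommRing A] [CommRing R] [Algebra A R]
    [Algebra.IsIntegral A R] (hinj : Function.Injective (algebraMap A R)) :
    ringKrullDim A ≤ ringKrullDim R := by
  refine iSup_le fun l => ?_
  obtain ⟨Q, -, hQ, hQ'⟩ := Ideal.exists_ideal_over_prime_of_isIntegral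
    (RelSeries.head l).asIdeal (⊥ : Ideal R) (by
      rw [← RingHom.ker_eq_comap_bot, (RingHom.injective_iff_ker_eq_bot _).1 hinj]
      exact bot_le)
  have : Q.LiesOver (RelSeries.head l).asIdeal := ⟨hQ'.symm⟩
  obtain ⟨L, hL, -⟩ := Ideal.exists_ltSeries_of_hasGoingUp l Q
  rw [← hL]
  exact le_iSup (fun p : LTSeries (PrimeSpectrum R) => (p.length : WithBot ℕ∞)) L

lemma algdep_domain {k R : Type} [Field k] [CommRing R] [IsDomain R] [Algebra k R]
    [Algebra.FiniteType k R] (hdim : ringKrullDim R ≤ 2) (v : Fin 3 → R) :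
    ¬ AlgebraicIndependent k v := by
  intro hv
  obtain ⟨s, g, hg, hintg⟩ := exists_integral_inj_algHom_of_fg k R
  have hs : s ≤ 2 := by
    algebraize [g.toRingHom]
    have h1 := ringKrullDim_le_of_integral_aux (A := MvPolynomial (Fin s) k) (R := R) hg
    rw [MvPolynomial.ringKrullDim_of_isNoetherianRing, ringKrullDim_eq_zero_of_field] at h1
    have h2 := h1.trans hdim
    rw [zero_add, Nat.card_eq_fintype_card, Fintype.card_fin] at h2
    exact_mod_cast h2
  have halg : Algebra.IsAlgebraic (Algebra.adjoin k (Set.range fun i => g (X i))) R := by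
    have h0 : Algebra.IsIntegral (Algebra.adjoin k (Set.range fun i => g (X i))) R := by
      constructor
      intro x
      obtain ⟨p, hp, hpx⟩ := hintg x
      have hmem : ∀ q, g q ∈ Algebra.adjoin k (Set.range fun i => g (X i)) := by
        intro q
        have : g = aeval (fun i => g (X i)) := by
          ext i; simp
        rw [Algebra.adjoin_range_eq_range_aeval, ← this]
        exact ⟨q, rfl⟩
      refine ⟨p.map (g.toRingHom.codRestrict _ hmem), hp.map _, ?_⟩
      rw [Polynomial.eval₂_map]
      exact hpx
    exact h0.isAlgebraic
  have h1 := Algebra.IsAlgebraic.trdeg_le_cardinalMk k (Set.range fun i => g (X i))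
  have h2 := hv.cardinalMk_le_trdeg
  have h3 : Cardinal.mk (Set.range fun i : Fin s => g (X i)) ≤ s := by
    simpa using Cardinal.mk_range_le (f := fun i : Fin s => g (X i))
  have h4 := h2.trans (h1.trans h3)
  simp at h4
  have : (3:ℕ) ≤ s := by exact_mod_cast h4
  omega

lemma algdep {k R : Type} [Field k] [CommRing R] [Algebra k R]
    [Algebra.FiniteType k R] (hdim : ringKrullDim R ≤ 2) (v : Fin 3 → R) :
    ∃ G : MvPolynomial (Fin 3) k, G ≠ 0 ∧ aeval v G = 0 := by
  by_contra hcon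
  push Not at hcon
  have hinj : Function.Injective (aeval v : MvPolynomial (Fin 3) k →ₐ[k] R) := by
    rw [injective_iff_map_eq_zero]
    intro a ha
    by_contra h
    exact hcon a h ha
  obtain ⟨p, hp, hpc⟩ := Ideal.exists_comap_eq_of_mem_minimalPrimes_of_injective
    (f := (aeval v : MvPolynomial (Fin 3) k →ₐ[k] R).toRingHom) hinj ⊥ (by
      rw [IsDomain.minimalPrimes_eq_singleton_bot]; rfl)
  have := algdep_domain (k := k) (R := R ⧸ p) ((ringKrullDim_quotient_le p).trans hdim)
    (fun i => Ideal.Quotient.mk p (v i))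
  apply this
  rw [algebraicIndependent_iff]
  intro q hq
  have h1 : (aeval (fun i => Ideal.Quotient.mk p (v i)) q) = Ideal.Quotient.mkₐ k p (aeval v q) := by
    rw [← AlgHom.comp_apply, comp_aeval]; rfl
  rw [h1] at hq
  have h2 : aeval v q ∈ p := Ideal.Quotient.eq_zero_iff_mem.1 hq
  have h3 : q ∈ (⊥ : Ideal (MvPolynomial (Fin 3) k)) := by
    rw [← hpc]; exact h2
  simpa using h3

/-- The Koszul complex on a sequence of forms, presented by a square-zero matrix. -/
structure KosM (k : Type) [Field k] (n m : ℕ) (r : ℕ) (f : Fin r → PolyS k n m)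
    (d e : Fin r → ℕ) where
  ι : Type
  instF : Fintype ι
  instD : DecidableEq ι
  deg : ι → ℕ
  da : ι → ℕ
  db : ι → ℕ
  M : Matrix ι ι (PolyS k n m)
  MM : M * M = 0
  Mdeg : ∀ s t, deg t ≠ deg s + 1 → M s t = 0
  Mhom : ∀ s t, M s t ∈ grad k n m ((da t : ℤ) - da s, (db t : ℤ) - db s)
  degle : ∀ t, deg t ≤ r
  z : ι
  zdeg : deg z = 0
  zuniq : ∀ t, deg t = 0 → t = z
  zda : da z = 0
  zdb : db z = 0
  row : ∀ t, M z t ∈ Ideal.span (Set.range f)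
  hom : ∀ g ∈ Ideal.span (Set.range f), ∃ H : Matrix ι ι (PolyS k n m),
    M * H + H * M = g • (1 : Matrix ι ι (PolyS k n m)) ∧
      ∀ s t, deg s ≠ deg t + 1 → H s t = 0
  euler : ∀ x y : MvPolynomial (Fin 2) ℤ,
    ∑ t, (-1) ^ deg t * (x ^ da t * y ^ db t) = ∏ i, (1 - x ^ d i * y ^ e i)

/-- The Koszul complex on the empty sequence. -/
def kosNil (k : Type) [Field k] (n m : ℕ) (f : Fin 0 → PolyS k n m)
    (d e : Fin 0 → ℕ) : KosM k n m 0 f d e where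
  ι := Unit
  instF := inferInstance
  instD := inferInstance
  deg _ := 0
  da _ := 0
  db _ := 0
  M := 0
  MM := by simp
  Mdeg := by simp
  Mhom s t := Submodule.zero_mem _
  degle _ := le_rfl
  z := ()
  zdeg := rfl
  zuniq _ _ := rfl
  zda := rfl
  zdb := rfl
  row t := Submodule.zero_mem _
  hom g hg := by
    refine ⟨0, ?_, by simp⟩
    have : g = 0 := by simpa [Set.range_eq_empty] using hg
    simp [this]
  euler x y := by simp

/-- Adding one more form to the Koszul complex: the mapping cone. -/
def kosCons {k : Type} [Field k] {n m r : ℕ} (f : Fin (r + 1) → PolyS k n m)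
    (d e : Fin (r + 1) → ℕ) (hf : f 0 ∈ grad k n m ((d 0 : ℤ), (e 0 : ℤ)))
    (K : KosM k n m r (fun i => f i.succ) (fun i => d i.succ) (fun i => e i.succ)) :
    KosM k n m (r + 1) f d e :=
  letI := K.instF
  letI := K.instD
  { ι := K.ι ⊕ K.ι
    instF := inferInstance
    instD := inferInstance
    deg := Sum.elim K.deg (fun t => K.deg t + 1)
    da := Sum.elim K.da (fun t => K.da t + d 0)
    db := Sum.elim K.db (fun t => K.db t + e 0)
    M := Matrix.fromBlocks K.M (f 0 • 1) 0 (-K.M)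
    MM := by
      rw [Matrix.fromBlocks_multiply]
      simp [K.MM]
    Mdeg := by
      rintro (s | s) (t | t) h
      · exact K.Mdeg s t h
      · simp only [Matrix.fromBlocks_apply₁₂, Matrix.smul_apply]
        rw [Matrix.one_apply_ne, smul_zero]
        rintro rfl
        exact h rfl
      · rfl
      · simp only [Matrix.fromBlocks_apply₂₂, Matrix.neg_apply]
        rw [K.Mdeg s t, neg_zero]
        simp only [Sum.elim_inr] at h
        omega
    Mhom := by
      rintro (s | s) (t | t)
      · exact K.Mhom s t
      · simp only [Matrix.fromBlocks_apply₁₂, Matrix.smul_apply, Sum.elim_inl, Sum.elim_inr]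
        by_cases hst : s = t
        · subst hst
          simpa using hf
        · rw [Matrix.one_apply_ne hst, smul_zero]
          exact Submodule.zero_mem _
      · exact Submodule.zero_mem _
      · simp only [Matrix.fromBlocks_apply₂₂, Matrix.neg_apply, Sum.elim_inr]
        have := Submodule.neg_mem _ (K.Mhom s t)
        convert this using 3 <;> push_cast <;> ring
    degle := by
      rintro (t | t)
      · exact (K.degle t).trans (Nat.le_succ r)
      · exact Nat.succ_le_succ (K.degle t)
    z := Sum.inl K.z
    zdeg := K.zdeg
    zuniq := by
      rintro (t | t) h
      · rw [K.zuniq t h]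
      · simp at h
    zda := K.zda
    zdb := K.zdb
    row := by
      rintro (t | t)
      · refine Ideal.span_mono ?_ (K.row t)
        rintro _ ⟨i, rfl⟩
        exact ⟨i.succ, rfl⟩
      · simp only [Matrix.fromBlocks_apply₁₂, Matrix.smul_apply, smul_eq_mul]
        exact Ideal.mul_mem_right _ _ (Ideal.subset_span ⟨0, rfl⟩)
    hom := by
      intro g hg
      have hr : Set.range f = insert (f 0) (Set.range fun i : Fin r => f i.succ) := by
        ext x
        simp [Fin.exists_fin_succ, eq_comm]
      rw [hr, Ideal.mem_span_insert] at hg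
      obtain ⟨a, g', hg', rfl⟩ := hg
      obtain ⟨H, hH, hHd⟩ := K.hom g' hg'
      refine ⟨Matrix.fromBlocks H 0 (a • 1) (-H), ?_, ?_⟩
      · rw [Matrix.fromBlocks_multiply, Matrix.fromBlocks_multiply, Matrix.fromBlocks_add,
          ← Matrix.fromBlocks_one, Matrix.fromBlocks_smul]
        congr 1
        · simp only [← hH, add_smul]
          simp [smul_smul, mul_comm]
          abel
        · simp
        · simp
        · simp only [add_smul, ← hH]
          simp [smul_smul, mul_comm]
          abel
      · rintro (s | s) (t | t) h
        · exact hHd s t h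
        · rfl
        · simp only [Matrix.fromBlocks_apply₂₁, Matrix.smul_apply]
          rw [Matrix.one_apply_ne, smul_zero]
          rintro rfl
          exact h rfl
        · simp only [Matrix.fromBlocks_apply₂₂, Matrix.neg_apply]
          rw [hHd s t, neg_zero]
          simp only [Sum.elim_inr] at h
          omega
    euler := by
      intro x y
      rw [Fintype.sum_sum_type, Fin.prod_univ_succ, ← K.euler x y, sub_mul, one_mul,
        sub_eq_add_neg, Finset.mul_sum, ← Finset.sum_neg_distrib]
      congr 1
      refine Finset.sum_congr rfl fun t _ => ?_
      simp only [Sum.elim_inr]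
      ring }

lemma exists_kos (k : Type) [Field k] (n m : ℕ) : ∀ (r : ℕ) (f : Fin r → PolyS k n m)
    (d e : Fin r → ℕ), (∀ i, f i ∈ grad k n m ((d i : ℤ), (e i : ℤ))) →
    Nonempty (KosM k n m r f d e)
  | 0, f, d, e, _ => ⟨kosNil k n m f d e⟩
  | r + 1, f, d, e, hf => by
    obtain ⟨K⟩ := exists_kos k n m r (fun i => f i.succ) (fun i => d i.succ)
      (fun i => e i.succ) (fun i => hf i.succ)
    exact ⟨kosCons f d e (hf 0) K⟩

attribute [instance] KosM.instF KosM.instD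

open Classical in
/-- View a polynomial as a polynomial in the variable `s` with coefficients in the same ring. -/
def thetaVar {σ k : Type} [Field k] (s : σ) :
    MvPolynomial σ k →ₐ[k] Polynomial (MvPolynomial σ k) :=
  aeval (fun t => if t = s then Polynomial.X else Polynomial.C (X t))

lemma eval_thetaVar {σ k : Type} [Field k] (s : σ) (p : MvPolynomial σ k) :
    Polynomial.eval (X s) (thetaVar s p) = p := by
  have : ((Polynomial.aeval (X s : MvPolynomial σ k)).restrictScalars k).comp (thetaVar s)
      = AlgHom.id k _ := by
    ext t
    by_cases h : t = s
    · subst h; simp [thetaVar]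
    · simp [thetaVar, h]
  have h2 := DFunLike.congr_fun this p
  simpa [Polynomial.aeval_def, Polynomial.eval₂_eq_eval_map] using h2

lemma monic_reg {R : Type} [CommRing R] (Q : Ideal R) (f g : Polynomial R) (hf : f.Monic)
    (h : f * g ∈ Q.map Polynomial.C) : g ∈ Q.map Polynomial.C := by
  have key : ∀ q : Polynomial R, q ∈ Q.map (Polynomial.C : R →+* _) ↔
      q.map (Ideal.Quotient.mk Q) = 0 := by
    intro q
    rw [Ideal.mem_map_C_iff, Polynomial.ext_iff]
    simp [Polynomial.coeff_map, Ideal.Quotient.eq_zero_iff_mem]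
  rw [key] at h ⊢
  rw [Polynomial.map_mul] at h
  exact ((hf.map (Ideal.Quotient.mk Q)).mul_right_eq_zero_iff).1 h

lemma reg_var {σ k : Type} [Field k] (P : σ → MvPolynomial σ k) (s : σ) (T : Set σ)
    (hs : (thetaVar s (P s)).Monic) (hT : ∀ t ∈ T, thetaVar s (P t) = Polynomial.C (P t))
    (a : MvPolynomial σ k) (h : P s * a ∈ Ideal.span (P '' T)) : a ∈ Ideal.span (P '' T) := by
  set Q := Ideal.span (P '' T)
  have h1 : ∀ q ∈ Q, thetaVar s q ∈ Q.map (Polynomial.C : _ →+* _) := by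
    intro q hq
    have : Q ≤ (Q.map (Polynomial.C : _ →+* _)).comap (thetaVar s).toRingHom := by
      refine Ideal.span_le.2 ?_
      rintro _ ⟨t, ht, rfl⟩
      change thetaVar s (P t) ∈ Q.map (Polynomial.C : _ →+* _)
      rw [hT t ht]
      exact Ideal.mem_map_of_mem _ (Ideal.subset_span ⟨t, ht, rfl⟩)
    exact this hq
  have h2 := h1 _ h
  rw [map_mul] at h2
  have h3 := monic_reg Q _ _ hs h2
  rw [← eval_thetaVar s a]
  have h4 := Ideal.mem_map_of_mem (Polynomial.evalRingHom (X s)) h3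
  rw [Ideal.map_map] at h4
  have : (Polynomial.evalRingHom (X s : MvPolynomial σ k)).comp Polynomial.C = RingHom.id _ := by
    ext <;> simp
  rw [this, Ideal.map_id] at h4
  exact h4

/-- `p` is a binary form in `X s, X v`, monic in `X s`. -/
def BinMonic {σ k : Type} [Field k] (s v : σ) (p : MvPolynomial σ k) : Prop :=
  ∃ (A : ℕ) (c : ℕ → k), c A = 1 ∧
    p = ∑ a ∈ Finset.range (A + 1), C (c a) * (X s ^ a * X v ^ (A - a))

lemma BinMonic.monic {σ k : Type} [Field k] {s v : σ} (hv : v ≠ s) {p : MvPolynomial σ k}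
    (h : BinMonic s v p) : (thetaVar s p).Monic := by
  obtain ⟨A, c, hc, rfl⟩ := h
  rw [Finset.sum_range_succ, hc, map_add, add_comm]
  have h1 : thetaVar s (C 1 * (X s ^ A * X v ^ (A - A)) : MvPolynomial σ k) = Polynomial.X ^ A := by
    simp [thetaVar]
  rw [h1]
  apply Polynomial.monic_X_pow_add
  rw [← Polynomial.mem_degreeLT, map_sum]
  refine Submodule.sum_mem _ fun a ha => ?_
  have h2 : thetaVar s (C (c a) * (X s ^ a * X v ^ (A - a)) : MvPolynomial σ k)
      = Polynomial.C (C (c a) * X v ^ (A - a)) * Polynomial.X ^ a := by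
    simp only [thetaVar, map_mul, map_pow, aeval_X, if_true, if_neg hv, algHom_C]
    rw [IsScalarTower.algebraMap_apply k (MvPolynomial σ k) (Polynomial (MvPolynomial σ k))]
    simp only [Polynomial.algebraMap_eq, algebraMap_eq]
    ring
  rw [h2, Polynomial.mem_degreeLT]
  refine (Polynomial.degree_C_mul_X_pow_le _ _).trans_lt ?_
  exact_mod_cast Finset.mem_range.1 ha

lemma BinMonic.const {σ k : Type} [Field k] {s t v : σ} (hv : v ≠ s) (ht : t ≠ s)
    {p : MvPolynomial σ k} (h : BinMonic t v p) : thetaVar s p = Polynomial.C p := by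
  obtain ⟨A, c, hc, rfl⟩ := h
  rw [map_sum, map_sum]
  refine Finset.sum_congr rfl fun a _ => ?_
  simp only [thetaVar, map_mul, map_pow, aeval_X, if_neg ht, if_neg hv, algHom_C]
  rw [IsScalarTower.algebraMap_apply k (MvPolynomial σ k) (Polynomial (MvPolynomial σ k))]
  simp only [Polynomial.algebraMap_eq, algebraMap_eq]

lemma acyclic_aux {k : Type} [Field k] {n m r : ℕ} {f : Fin r → PolyS k n m}
    {d e : Fin r → ℕ} (K : KosM k n m r f d e) {τ : Type} [DecidableEq τ] (u : PolyS k n m)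
    (W : Finset τ) (P : τ → PolyS k n m)
    (hreg : ∀ T ⊆ W, ∀ s ∈ W, s ∉ T → ∀ a, P s * a ∈ Ideal.span (P '' (T : Set τ)) →
      a ∈ Ideal.span (P '' (T : Set τ)))
    (hP : ∀ s ∈ W, ∃ N : ℕ, u ^ N * P s ∈ Ideal.span (Set.range f)) :
    ∀ (c : ℕ) (T : Finset τ), T ⊆ W → (W \ T).card = c → ∀ i, r < i + c →
      ∀ a : K.ι → PolyS k n m, (∀ t, K.deg t ≠ i → a t = 0) →
      (∀ t, (K.M.mulVec a) t ∈ Ideal.span (P '' (T : Set τ))) →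
      ∃ (N : ℕ) (b : K.ι → PolyS k n m),
        ∀ t, (u ^ N • a - K.M.mulVec b) t ∈ Ideal.span (P '' (T : Set τ)) := by
  intro c
  induction c with
  | zero =>
    intro T hT hc i hi a ha _
    refine ⟨0, 0, fun t => ?_⟩
    have : a t = 0 := ha t (by have := K.degle t; omega)
    simp [this]
  | succ c ih =>
    intro T hT hc i hi a ha hda
    obtain ⟨s, hs⟩ : (W \ T).Nonempty := by
      rw [← Finset.card_pos]; omega
    rw [Finset.mem_sdiff] at hs
    obtain ⟨N₁, hN₁⟩ := hP s hs.1
    obtain ⟨H, hH, hHd⟩ := K.hom _ hN₁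
    set Q := Ideal.span (P '' (T : Set τ)) with hQ
    have hins : Ideal.span (P '' ((insert s T : Finset τ) : Set τ))
        = Ideal.span (insert (P s) (P '' (T : Set τ))) := by
      rw [Finset.coe_insert, Set.image_insert_eq]
    have hmap : ∀ (Q : Ideal (PolyS k n m)) (A : Matrix K.ι K.ι (PolyS k n m))
        (x : K.ι → PolyS k n m), (∀ t, x t ∈ Q) → ∀ t, (A.mulVec x) t ∈ Q := by
      intro Q A x hx t
      exact Ideal.map_pi Q x hx A.mulVecLin t
    have hMH : K.M.mulVec (H.mulVec a) = (u ^ N₁ * P s) • a - H.mulVec (K.M.mulVec a) := by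
      rw [eq_sub_iff_add_eq, Matrix.mulVec_mulVec, Matrix.mulVec_mulVec, ← Matrix.add_mulVec, hH,
        Matrix.smul_mulVec, Matrix.one_mulVec]
    have hle : Q ≤ Ideal.span (P '' ((insert s T : Finset τ) : Set τ)) := by
      apply Ideal.span_mono
      apply Set.image_mono
      simp
    obtain ⟨N₂, c₀, hc₀⟩ := ih (insert s T) (Finset.insert_subset hs.1 hT) (by
        rw [Finset.sdiff_insert, Finset.card_erase_of_mem (Finset.mem_sdiff.2 hs), hc]
        rfl) (i + 1) (by omega) (H.mulVec a) (by
        intro t ht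
        rw [Matrix.mulVec, dotProduct]
        refine Finset.sum_eq_zero fun t' _ => ?_
        by_cases h : K.deg t' = i
        · rw [hHd t t' (by omega), zero_mul]
        · rw [ha t' h, mul_zero]) (by
        intro t
        rw [hMH]
        refine Submodule.sub_mem _ ?_ (hle (hmap Q _ _ hda t))
        have : P s ∈ Ideal.span (P '' ((insert s T : Finset τ) : Set τ)) :=
          Ideal.subset_span ⟨s, by simp, rfl⟩
        exact Ideal.mul_mem_right _ _ (Ideal.mul_mem_left _ _ this))
    simp_rw [hins, Ideal.mem_span_insert] at hc₀
    choose b q hq hbq using hc₀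
    refine ⟨N₂ + N₁, b, fun t => ?_⟩
    refine hreg T hT s hs.1 hs.2 _ ?_
    have e1 : u ^ N₂ • H.mulVec a = K.M.mulVec c₀ + (P s • b + q) := by
      rw [← sub_eq_iff_eq_add']
      funext t
      rw [hbq t]
      simp [mul_comm]
    have e2 := congrArg K.M.mulVec e1
    rw [Matrix.mulVec_smul, hMH, Matrix.mulVec_add, Matrix.mulVec_mulVec c₀, K.MM, Matrix.zero_mulVec,
      zero_add, Matrix.mulVec_add, Matrix.mulVec_smul, smul_sub, smul_smul] at e2
    have e3 := congrFun e2 t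
    have e4 : P s * (u ^ (N₂ + N₁) • a - K.M.mulVec b) t
        = u ^ N₂ * (H.mulVec (K.M.mulVec a)) t + (K.M.mulVec q) t := by
      simp only [Pi.sub_apply, Pi.smul_apply, Pi.add_apply, smul_eq_mul] at e3 ⊢
      rw [pow_add]
      linear_combination e3
    rw [e4]
    exact Ideal.add_mem _ (Ideal.mul_mem_left _ _ (hmap Q _ _ hda t)) (hmap Q _ _ hq t)

lemma acyclic {k : Type} [Field k] {n m r : ℕ} {f : Fin r → PolyS k n m}
    {d e : Fin r → ℕ} (K : KosM k n m r f d e) {τ : Type} [DecidableEq τ] (u : PolyS k n m)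
    (W : Finset τ) (hW : W.card = r) (P : τ → PolyS k n m)
    (hreg : ∀ T ⊆ W, ∀ s ∈ W, s ∉ T → ∀ a, P s * a ∈ Ideal.span (P '' (T : Set τ)) →
      a ∈ Ideal.span (P '' (T : Set τ)))
    (hP : ∀ s ∈ W, ∃ N : ℕ, u ^ N * P s ∈ Ideal.span (Set.range f))
    (i : ℕ) (hi : 1 ≤ i) (a : K.ι → PolyS k n m) (ha : ∀ t, K.deg t ≠ i → a t = 0)
    (hda : K.M.mulVec a = 0) : ∃ (N : ℕ) (b : K.ι → PolyS k n m), u ^ N • a = K.M.mulVec b := by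
  obtain ⟨N, b, h⟩ := acyclic_aux K u W P hreg hP r ∅ (by simp) (by simpa using hW) i (by omega) a ha
    (by intro t; rw [hda]; simp)
  refine ⟨N, b, ?_⟩
  rw [← sub_eq_zero]
  funext t
  simpa using h t

/-- Bihomogeneous component. -/
abbrev bcmp (k : Type) [Field k] (n m : ℕ) (γ : ℤ × ℤ) : PolyS k n m →ₗ[k] PolyS k n m :=
  weightedHomogeneousComponent (wt n m) γ

lemma cmp_mem {k : Type} [Field k] {n m : ℕ} (γ : ℤ × ℤ) (a : PolyS k n m) :
    bcmp k n m γ a ∈ grad k n m γ :=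
  weightedHomogeneousComponent_mem _ _ _

lemma cmp_of_mem {k : Type} [Field k] {n m : ℕ} {γ δ : ℤ × ℤ} {a : PolyS k n m}
    (h : a ∈ grad k n m γ) : bcmp k n m δ a = if δ = γ then a else 0 :=
  weightedHomogeneousComponent_of_mem h

lemma cmp_self {k : Type} [Field k] {n m : ℕ} {γ : ℤ × ℤ} {a : PolyS k n m}
    (h : a ∈ grad k n m γ) : bcmp k n m γ a = a := by
  rw [cmp_of_mem h, if_pos rfl]

lemma grad_mul {k : Type} [Field k] {n m : ℕ} {γ δ : ℤ × ℤ} {a b : PolyS k n m}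
    (h : a ∈ grad k n m γ) (h' : b ∈ grad k n m δ) : a * b ∈ grad k n m (γ + δ) :=
  IsWeightedHomogeneous.mul h h'

lemma cmp_mul {k : Type} [Field k] {n m : ℕ} {γ δ : ℤ × ℤ} {g : PolyS k n m}
    (hg : g ∈ grad k n m δ) (a : PolyS k n m) :
    bcmp k n m γ (g * a) = g * bcmp k n m (γ - δ) a := by
  induction a using MvPolynomial.induction_on' with
  | monomial u c =>
    have h1 : monomial u c ∈ grad k n m (Finsupp.weight (wt n m) u) :=
      isWeightedHomogeneous_monomial _ _ _ rfl
    rw [cmp_of_mem h1, cmp_of_mem (grad_mul hg h1)]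
    by_cases h : γ = δ + Finsupp.weight (wt n m) u
    · rw [if_pos h, if_pos (by rw [h]; abel)]
    · rw [if_neg h, if_neg (by contrapose! h; rw [← h]; abel), mul_zero]
  | add p q hp hq => rw [mul_add, map_add, hp, hq, map_add, mul_add]

lemma X_inl_mem {k : Type} [Field k] {n m : ℕ} (i : Fin (n+1)) :
    (X (Sum.inl i) : PolyS k n m) ∈ grad k n m (1, 0) :=
  isWeightedHomogeneous_X _ _ _

lemma X_inr_mem {k : Type} [Field k] {n m : ℕ} (i : Fin (m+1)) :
    (X (Sum.inr i) : PolyS k n m) ∈ grad k n m (0, 1) :=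
  isWeightedHomogeneous_X _ _ _

lemma grad_pow {k : Type} [Field k] {n m : ℕ} {γ : ℤ × ℤ} {a : PolyS k n m}
    (h : a ∈ grad k n m γ) (N : ℕ) : a ^ N ∈ grad k n m (N • γ) :=
  IsWeightedHomogeneous.pow h N

/-- The chart monomial. -/
abbrev uu (k : Type) [Field k] {n m : ℕ} (i : Fin (n+1)) (j : Fin (m+1)) : PolyS k n m :=
  X (Sum.inl i) * X (Sum.inr j)

lemma uu_mem {k : Type} [Field k] {n m : ℕ} (i : Fin (n+1)) (j : Fin (m+1)) :
    (uu k i j : PolyS k n m) ∈ grad k n m (1, 1) := by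
  simpa using grad_mul (X_inl_mem (k := k) (m := m) i) (X_inr_mem j)

lemma span_cmp {k : Type} [Field k] {n m r : ℕ} {f : Fin r → PolyS k n m} {d e : Fin r → ℕ}
    (hf : ∀ i, f i ∈ grad k n m ((d i : ℤ), (e i : ℤ))) (γ : ℤ × ℤ) {a : PolyS k n m}
    (ha : a ∈ Ideal.span (Set.range f)) : bcmp k n m γ a ∈ Ideal.span (Set.range f) := by
  obtain ⟨c, rfl⟩ := Ideal.mem_span_range_iff_exists_fun.1 ha
  rw [map_sum]
  refine Ideal.sum_mem _ fun i _ => ?_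
  rw [mul_comm, cmp_mul (hf i)]
  exact Ideal.mul_mem_right _ _ (Ideal.subset_span ⟨i, rfl⟩)

lemma mem_sat {k : Type} [Field k] {n m : ℕ} {I : Ideal (PolyS k n m)} {a : PolyS k n m} :
    a ∈ satIdeal I (Birr k n m) ↔ ∀ i j, ∃ N : ℕ, uu k i j ^ N * a ∈ I := by
  have hmono : Monotone fun t : ℕ => Submodule.colon I (((Birr k n m : Ideal (PolyS k n m)) :
      Set (PolyS k n m)) ^ t) := by
    refine monotone_nat_of_le_succ fun t x hx => ?_
    rw [Submodule.mem_colon] at hx ⊢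
    intro s hs
    rw [pow_succ] at hs
    obtain ⟨a, ha, c, hc, rfl⟩ := hs
    have := I.mul_mem_right c (hx a ha)
    simpa [mul_assoc] using this
  have hdir := (hmono.directed_le)
  rw [satIdeal, Submodule.mem_iSup_of_directed _ hdir]
  constructor
  · rintro ⟨t, ht⟩ i j
    rw [Submodule.mem_colon] at ht
    refine ⟨t, ?_⟩
    have hB : uu k i j ∈ Birr k n m :=
      Ideal.mul_mem_mul (Ideal.subset_span ⟨i, rfl⟩) (Ideal.subset_span ⟨j, rfl⟩)
    have := ht _ (Set.pow_mem_pow (s := ((Birr k n m : Ideal (PolyS k n m)) :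
      Set (PolyS k n m))) hB)
    rwa [smul_eq_mul, mul_comm] at this
  · intro h
    let Q : Ideal (PolyS k n m) := Submodule.colon I {a}
    have hQ : ∀ b, b ∈ Q ↔ b * a ∈ I := by
      intro b; simp [Q, Submodule.mem_colon]
    have hle : Birr k n m ≤ Q.radical := by
      rw [Birr, Bone, Btwo, Ideal.span_mul_span', Ideal.span_le]
      rintro _ ⟨_, ⟨i, rfl⟩, _, ⟨j, rfl⟩, rfl⟩
      obtain ⟨N, hN⟩ := h i j
      exact ⟨N, (hQ _).2 hN⟩
    obtain ⟨t, ht⟩ := Ideal.exists_pow_le_of_le_radical_of_fg hle (IsNoetherian.noetherian _)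
    refine ⟨t, ?_⟩
    rw [Submodule.mem_colon]
    intro s hs
    have hsub : ∀ t : ℕ, ((Birr k n m : Ideal (PolyS k n m)) : Set (PolyS k n m)) ^ t ⊆
        ((Birr k n m ^ t : Ideal (PolyS k n m)) : Set (PolyS k n m)) := by
      intro t
      induction t with
      | zero => simp
      | succ t ih =>
        rintro _ hx
        rw [pow_succ] at hx
        obtain ⟨a, ha, c, hc, rfl⟩ := hx
        rw [pow_succ]
        exact Ideal.mul_mem_mul (ih ha) hc
    have := (hQ s).1 (ht (hsub t hs))
    rwa [smul_eq_mul, mul_comm]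

lemma sat_cmp {k : Type} [Field k] {n m r : ℕ} {f : Fin r → PolyS k n m} {d e : Fin r → ℕ}
    (hf : ∀ i, f i ∈ grad k n m ((d i : ℤ), (e i : ℤ))) (γ : ℤ × ℤ) {a : PolyS k n m}
    (ha : a ∈ satIdeal (Ideal.span (Set.range f)) (Birr k n m)) :
    bcmp k n m γ a ∈ satIdeal (Ideal.span (Set.range f)) (Birr k n m) := by
  rw [mem_sat] at ha ⊢
  intro i j
  obtain ⟨N, hN⟩ := ha i j
  refine ⟨N, ?_⟩
  have := span_cmp hf (γ + N • (1,1)) hN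
  rwa [cmp_mul (grad_pow (uu_mem i j) N), add_sub_cancel_right] at this

lemma le_sat {k : Type} [Field k] {n m : ℕ} {I : Ideal (PolyS k n m)} :
    I ≤ satIdeal I (Birr k n m) := fun a ha => mem_sat.2 fun _ _ => ⟨0, by simpa using ha⟩


lemma cmp_aeval {k : Type} [Field k] {n m : ℕ} {s v v' : Fin (n+1) ⊕ Fin (m+1)} {ω ω' : ℤ × ℤ}
    (hs : wt n m s = ω) (hv : wt n m v = ω) (hv' : wt n m v' = ω')
    (hinj : ∀ a b a' b' : ℕ, a • ω + b • ω' = a' • ω + b' • ω' → a = a' ∧ b = b')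
    (α β : ℕ) (G : MvPolynomial (Fin 3) k) :
    bcmp k n m (α • ω + β • ω') (aeval ![X s, X v, X v'] G) =
      ∑ a ∈ Finset.range (α + 1), C (coeff (Finsupp.equivFunOnFinite.symm ![a, α - a, β]) G) *
        (X s ^ a * X v ^ (α - a) * X v' ^ β) := by
  induction G using MvPolynomial.induction_on' with
  | add p q hp hq =>
    rw [map_add, map_add, hp, hq, ← Finset.sum_add_distrib]
    refine Finset.sum_congr rfl fun a _ => ?_
    rw [coeff_add, C_add, add_mul]
  | monomial u c =>
    have h1 : aeval ![X s, X v, X v'] (monomial u c) =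
        (C c * (X s ^ u 0 * X v ^ u 1 * X v' ^ u 2) : PolyS k n m) := by
      rw [aeval_monomial, Finsupp.prod_fintype _ _ (by simp)]
      simp [Fin.prod_univ_three, algebraMap_eq]
    have h2 : (C c * (X s ^ u 0 * X v ^ u 1 * X v' ^ u 2) : PolyS k n m) ∈
        grad k n m ((u 0 + u 1) • ω + u 2 • ω') := by
      have hX : ∀ t, (X t : PolyS k n m) ∈ grad k n m (wt n m t) :=
        fun t => isWeightedHomogeneous_X _ _ _
      have := grad_mul (grad_mul (grad_pow (hX s) (u 0)) (grad_pow (hX v) (u 1)))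
        (grad_pow (hX v') (u 2))
      rw [hs, hv, hv', ← add_smul] at this
      rw [← smul_eq_C_mul]
      exact Submodule.smul_mem _ _ this
    rw [h1, cmp_of_mem h2]
    simp only [coeff_monomial]
    by_cases h : α • ω + β • ω' = (u 0 + u 1) • ω + u 2 • ω'
    · rw [if_pos h]
      obtain ⟨h3, h4⟩ := hinj _ _ _ _ h
      rw [Finset.sum_eq_single (u 0)]
      · rw [if_pos, h4, h3, Nat.add_sub_cancel_left]
        ext t
        fin_cases t <;> simp [h3, h4]
      · intro b _ hb
        rw [if_neg, C_0, zero_mul]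
        intro hu
        apply hb
        rw [hu]; simp
      · intro hu
        simp at hu; omega
    · rw [if_neg h]
      symm
      refine Finset.sum_eq_zero fun a ha => ?_
      rw [if_neg, C_0, zero_mul]
      intro hu
      apply h
      rw [hu]
      have : a ≤ α := by simpa [Nat.lt_succ_iff] using ha
      simp [this]

lemma exists_binMonic {k : Type} [Field k] {n m r : ℕ} {f : Fin r → PolyS k n m}
    {d e : Fin r → ℕ} (hf : ∀ i, f i ∈ grad k n m ((d i : ℤ), (e i : ℤ)))
    (hdim : ringKrullDim (PolyS k n m ⧸ satIdeal (Ideal.span (Set.range f)) (Birr k n m)) ≤ 2)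
    {s v v' : Fin (n+1) ⊕ Fin (m+1)} {ω ω' : ℤ × ℤ}
    (hs : wt n m s = ω) (hv : wt n m v = ω) (hv' : wt n m v' = ω')
    (hinj : ∀ a b a' b' : ℕ, a • ω + b • ω' = a' • ω + b' • ω' → a = a' ∧ b = b')
    (i : Fin (n+1)) (j : Fin (m+1)) (hu : uu k i j = X v * X v') :
    ∃ P, BinMonic s v P ∧ ∃ N : ℕ, uu k i j ^ N * P ∈ Ideal.span (Set.range f) := by
  set J := satIdeal (Ideal.span (Set.range f)) (Birr k n m) with hJ
  obtain ⟨G, hG, hG0⟩ := algdep (k := k) hdim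
    (fun t => Ideal.Quotient.mkₐ k J ((![X s, X v, X v'] : Fin 3 → PolyS k n m) t))
  have hGJ : aeval (![X s, X v, X v'] : Fin 3 → PolyS k n m) G ∈ J := by
    rw [← Ideal.Quotient.eq_zero_iff_mem, ← hG0]
    have := comp_aeval_apply (R := k) (![X s, X v, X v'] : Fin 3 → PolyS k n m)
      (Ideal.Quotient.mkₐ k J) G
    exact this
  obtain ⟨u, hu0⟩ := ne_zero_iff.1 hG
  set α := u 0 + u 1 with hα
  set β := u 2 with hβ
  have h1 := sat_cmp hf (α • ω + β • ω') hGJ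
  rw [cmp_aeval hs hv hv' hinj] at h1
  set c : ℕ → k := fun a => coeff (Finsupp.equivFunOnFinite.symm ![a, α - a, β]) G with hc
  have hcu : c (u 0) ≠ 0 := by
    convert hu0 using 2
    ext t
    fin_cases t <;> simp [hα, hβ]
  classical
  obtain ⟨a0, ha0, ha0α, hmax⟩ : ∃ a0, c a0 ≠ 0 ∧ a0 ≤ α ∧ ∀ a, a0 < a → a ≤ α → c a = 0 := by
    refine ⟨Nat.findGreatest (fun a => c a ≠ 0) α, ?_, Nat.findGreatest_le _, ?_⟩
    · exact Nat.findGreatest_spec (P := fun a => c a ≠ 0) (m := u 0) (by omega) hcu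
    · intro a h1 h2
      by_contra h
      exact Nat.findGreatest_is_greatest h1 h2 h
  set P : PolyS k n m := ∑ a ∈ Finset.range (a0 + 1), C (c a / c a0) * (X s ^ a * X v ^ (a0 - a))
    with hP
  refine ⟨P, ⟨a0, fun a => c a / c a0, div_self ha0, hP⟩, ?_⟩
  have h2 : (∑ a ∈ Finset.range (α + 1), C (c a) * (X s ^ a * X v ^ (α - a) * X v' ^ β) :
      PolyS k n m) = C (c a0) * (X v ^ (α - a0) * X v' ^ β * P) := by
    rw [hP, Finset.mul_sum, Finset.mul_sum]
    symm
    rw [← Finset.sum_subset (Finset.range_subset_range.2 (Nat.succ_le_succ ha0α))]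
    · refine Finset.sum_congr rfl fun a ha => ?_
      have haa : a ≤ a0 := by simpa [Nat.lt_succ_iff] using ha
      have e1 : α - a = (α - a0) + (a0 - a) := by omega
      have e2 : (C (c a) : PolyS k n m) = C (c a0) * C (c a / c a0) := by
        rw [← C_mul, mul_div_cancel₀ _ ha0]
      rw [e1, e2, pow_add]
      ring
    · intro a ha ha'
      simp only [Finset.mem_range] at ha ha'
      rw [hmax a (by omega) (by omega), C_0, zero_mul]
  rw [show (∑ a ∈ Finset.range (α + 1), C (coeff (Finsupp.equivFunOnFinite.symm ![a, α - a, β]) G)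
    * (X s ^ a * X v ^ (α - a) * X v' ^ β) : PolyS k n m) = _ from h2] at h1
  have h3 : uu k i j ^ (α - a0 + β) * P ∈ J := by
    have := J.mul_mem_left (C (c a0)⁻¹ * (X v ^ β * X v' ^ (α - a0))) h1
    convert this using 1
    have e2 : (C (c a0)⁻¹ * C (c a0) : PolyS k n m) = 1 := by
      rw [← C_mul, inv_mul_cancel₀ ha0, C_1]
    rw [hu, mul_pow, pow_add, pow_add]
    linear_combination (- X v ^ β * X v' ^ (α - a0) * X v ^ (α - a0) * X v' ^ β * P) * e2
  obtain ⟨N, hN⟩ := mem_sat.1 h3 i j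
  exact ⟨N + (α - a0 + β), by rwa [pow_add, mul_assoc]⟩

lemma acyclic_chart {k : Type} [Field k] {n m : ℕ} {f : Fin (n+m) → PolyS k n m}
    {d e : Fin (n+m) → ℕ} (hf : ∀ i, f i ∈ grad k n m ((d i : ℤ), (e i : ℤ)))
    (hdim : ringKrullDim (PolyS k n m ⧸ satIdeal (Ideal.span (Set.range f)) (Birr k n m)) ≤ 2)
    (K : KosM k n m (n+m) f d e) (i : Fin (n+1)) (j : Fin (m+1))
    (q : ℕ) (hq : 1 ≤ q) (a : K.ι → PolyS k n m) (ha : ∀ t, K.deg t ≠ q → a t = 0)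
    (hda : K.M.mulVec a = 0) :
    ∃ (N : ℕ) (b : K.ι → PolyS k n m), uu k i j ^ N • a = K.M.mulVec b := by
  have hex : ∀ s : Fin (n+1) ⊕ Fin (m+1), ∃ P, BinMonic s (Sum.elim (fun _ => Sum.inl i)
      (fun _ => Sum.inr j) s) P ∧ ∃ N : ℕ, uu k i j ^ N * P ∈ Ideal.span (Set.range f) := by
    rintro (s | s)
    · refine exists_binMonic hf hdim (s := Sum.inl s) (v := Sum.inl i) (v' := Sum.inr j)
        (ω := (1,0)) (ω' := (0,1)) rfl rfl rfl ?_ i j rfl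
      intro a b a' b' h
      simpa [Prod.ext_iff] using h
    · refine exists_binMonic hf hdim (s := Sum.inr s) (v := Sum.inr j) (v' := Sum.inl i)
        (ω := (0,1)) (ω' := (1,0)) rfl rfl rfl ?_ i j (mul_comm _ _)
      intro a b a' b' h
      simpa [Prod.ext_iff, and_comm] using h
  choose P hP1 hP2 using hex
  refine acyclic K (uu k i j) ((Finset.univ.erase (Sum.inl i)).erase (Sum.inr j)) ?_ P ?_
    (fun s _ => hP2 s) q hq a ha hda
  · rw [Finset.card_erase_of_mem (by simp), Finset.card_erase_of_mem (by simp)]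
    simp
  · intro T hT s hs hsT b hb
    have hs' : s ≠ Sum.inr j ∧ s ≠ Sum.inl i := by simpa using hs
    have hne : ∀ t : Fin (n+1) ⊕ Fin (m+1), (Sum.elim (fun _ => Sum.inl i)
      (fun _ => Sum.inr j) t) ≠ s := by
      rintro (t | t)
      · exact hs'.2.symm
      · exact hs'.1.symm
    refine reg_var P s T ((hP1 s).monic (hne s)) ?_ b hb
    intro t ht
    refine (hP1 t).const (hne t) ?_
    rintro rfl
    exact hsT ht


lemma weight_wt {n m : ℕ} (u : (Fin (n+1) ⊕ Fin (m+1)) →₀ ℕ) :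
    Finsupp.weight (wt n m) u = (((∑ i, u (Sum.inl i) : ℕ) : ℤ), ((∑ j, u (Sum.inr j) : ℕ) : ℤ)) := by
  rw [Finsupp.weight_apply, Finsupp.sum_fintype _ _ (by simp), Fintype.sum_sum_type]
  simp [wt, Prod.ext_iff, Prod.fst_sum, Prod.snd_sum]

lemma grad_large {k : Type} [Field k] {n m : ℕ} (N : ℕ) {β : ℤ × ℤ}
    (h1 : ((n + 1) * N : ℕ) ≤ β.1) (h2 : ((m + 1) * N : ℕ) ≤ β.2) {b : PolyS k n m}
    (hb : b ∈ grad k n m β) :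
    b ∈ Ideal.span (Set.range fun p : Fin (n+1) × Fin (m+1) => uu k p.1 p.2 ^ N) := by
  rw [b.as_sum]
  refine Ideal.sum_mem _ fun u hu => ?_
  have hw : Finsupp.weight (wt n m) u = β := hb (mem_support_iff.1 hu)
  rw [weight_wt] at hw
  have e1 := congrArg Prod.fst hw
  have e2 := congrArg Prod.snd hw
  simp only at e1 e2
  rw [← e1] at h1
  rw [← e2] at h2
  norm_cast at h1 h2
  obtain ⟨i, hi⟩ : ∃ i, N ≤ u (Sum.inl i) := by
    by_contra! h
    have := Finset.sum_lt_sum_of_nonempty (s := (Finset.univ : Finset (Fin (n+1))))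
      Finset.univ_nonempty (fun i _ => h i)
    simp at this
    omega
  obtain ⟨j, hj⟩ : ∃ j, N ≤ u (Sum.inr j) := by
    by_contra! h
    have := Finset.sum_lt_sum_of_nonempty (s := (Finset.univ : Finset (Fin (m+1))))
      Finset.univ_nonempty (fun i _ => h i)
    simp at this
    omega
  have hdvd : uu k i j ^ N ∣ monomial u (coeff u b) := by
    rw [mul_pow, X_pow_eq_monomial, X_pow_eq_monomial, monomial_mul, monomial_dvd_monomial]
    refine ⟨Or.inr ?_, by simp⟩
    intro t
    rcases t with t | t
    · by_cases h : t = i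
      · subst h; simpa using hi
      · simp [Ne.symm h]
    · by_cases h : t = j
      · subst h; simpa using hj
      · simp [Ne.symm h]
  exact Ideal.mem_of_dvd _ hdvd (Ideal.subset_span ⟨(i, j), rfl⟩)

/-- Twisted projections to bihomogeneous components. -/
def tproj {k : Type} [Field k] {n m : ℕ} {ι : Type} (δ : ι → ℤ × ℤ) (γ : ℤ × ℤ) :
    (ι → PolyS k n m) →ₗ[k] (ι → PolyS k n m) :=
  LinearMap.pi fun t => (bcmp k n m (γ - δ t)).comp (LinearMap.proj t)

lemma tproj_apply {k : Type} [Field k] {n m : ℕ} {ι : Type} (δ : ι → ℤ × ℤ) (γ : ℤ × ℤ)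
    (w : ι → PolyS k n m) (t : ι) : tproj δ γ w t = bcmp k n m (γ - δ t) (w t) := rfl

lemma tproj_sum {k : Type} [Field k] {n m : ℕ} {ι : Type} [Fintype ι] (δ : ι → ℤ × ℤ)
    (w : ι → PolyS k n m) : ∃ F : Finset (ℤ × ℤ), w = ∑ γ ∈ F, tproj δ γ w := by
  have hfin : ∀ t, (Function.support fun γ => bcmp k n m γ (w t)).Finite :=
    fun t => weightedHomogeneousComponent_finsupp (w t)
  classical
  refine ⟨Finset.univ.biUnion fun t => (hfin t).toFinset.image (· + δ t), ?_⟩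
  funext t
  rw [Finset.sum_apply]
  simp only [tproj_apply]
  rw [← finsum_eq_sum_of_support_subset]
  · have := finsum_comp_equiv (Equiv.subRight (δ t)) (f := fun γ => bcmp k n m γ (w t))
    simp only [Equiv.subRight_apply] at this
    rw [this]
    exact (finsum_weightedHomogeneousComponent _ (w t)).symm
  · intro γ hγ
    simp only [Finset.coe_biUnion, Set.mem_iUnion]
    refine ⟨t, by simp, ?_⟩
    simp only [Finset.coe_image, Set.Finite.coe_toFinset]
    exact ⟨γ - δ t, hγ, sub_add_cancel _ _⟩

lemma large_degree {k : Type} [Field k] {n m : ℕ} {ι : Type} [Fintype ι] (δ : ι → ℤ × ℤ)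
    (W W' : Submodule (PolyS k n m) (ι → PolyS k n m))
    (hW : ∀ γ, ∀ w ∈ W, tproj δ γ w ∈ W)
    (hloc : ∀ w ∈ W, ∀ (i : Fin (n+1)) (j : Fin (m+1)), ∃ N : ℕ, (uu k i j : PolyS k n m) ^ N • w ∈ W') :
    ∃ N0 : ℕ, ∀ γ : ℤ × ℤ, (N0 : ℤ) ≤ γ.1 → (N0 : ℤ) ≤ γ.2 →
      ∀ w ∈ W, (∀ t, w t ∈ grad k n m (γ - δ t)) → w ∈ W' := by
  have key : ∀ w ∈ W, ∃ N0 : ℕ, ∀ γ : ℤ × ℤ, (N0 : ℤ) ≤ γ.1 → (N0 : ℤ) ≤ γ.2 →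
      ∀ c : PolyS k n m, tproj δ γ (c • w) ∈ W' := by
    intro w hw
    have key2 : ∀ γ0 : ℤ × ℤ, ∃ N0 : ℕ, ∀ γ : ℤ × ℤ, (N0 : ℤ) ≤ γ.1 → (N0 : ℤ) ≤ γ.2 →
      ∀ c : PolyS k n m, tproj δ γ (c • tproj δ γ0 w) ∈ W' := by
      intro γ0
      choose N hN using hloc _ (hW γ0 w hw)
      set D := ∑ i, ∑ j, N i j with hD
      have hND : ∀ i j, N i j ≤ D := fun i j =>
        (Finset.single_le_sum (f := fun j => N i j) (fun _ _ => Nat.zero_le _)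
          (Finset.mem_univ j)).trans
        (Finset.single_le_sum (f := fun i => ∑ j, N i j) (fun _ _ => Nat.zero_le _)
          (Finset.mem_univ i))
      refine ⟨(n+1) * D + (m+1) * D + γ0.1.toNat + γ0.2.toNat, fun γ h1 h2 c => ?_⟩
      have e : tproj δ γ (c • tproj δ γ0 w) = bcmp k n m (γ - γ0) c • tproj δ γ0 w := by
        funext t
        simp only [tproj_apply, Pi.smul_apply, smul_eq_mul]
        rw [mul_comm, cmp_mul (cmp_mem _ _), mul_comm]
        congr 3
        abel
      rw [e]
      have hb := grad_large D (β := γ - γ0) (by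
          push_cast at h1 ⊢; simp only [Prod.fst_sub]
          have := Int.self_le_toNat γ0.1
          have h3 : (0:ℤ) ≤ (m+1) * D := by positivity
          have h4 : (0:ℤ) ≤ γ0.2.toNat := by positivity
          push_cast at *
          linarith) (by
          push_cast at h2 ⊢; simp only [Prod.snd_sub]
          have := Int.self_le_toNat γ0.2
          have h3 : (0:ℤ) ≤ (n+1) * D := by positivity
          have h4 : (0:ℤ) ≤ γ0.1.toNat := by positivity
          push_cast at *
          linarith) (cmp_mem (γ - γ0) c)
      have hle : Ideal.span (Set.range fun p : Fin (n+1) × Fin (m+1) => uu k p.1 p.2 ^ D) ≤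
          Submodule.comap (LinearMap.toSpanSingleton _ _ (tproj δ γ0 w)) W' := by
        rw [Ideal.span_le]
        rintro _ ⟨⟨i, j⟩, rfl⟩
        change uu k i j ^ D • tproj δ γ0 w ∈ W'
        rw [← Nat.sub_add_cancel (hND i j), pow_add, mul_smul]
        exact W'.smul_mem _ (hN i j)
      exact hle hb
    choose N hN using key2
    obtain ⟨F, hF⟩ := tproj_sum δ w
    refine ⟨∑ γ0 ∈ F, N γ0, fun γ h1 h2 c => ?_⟩
    rw [hF, Finset.smul_sum, map_sum]
    refine Submodule.sum_mem _ fun γ0 h0 => hN γ0 γ ?_ ?_ c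
    · refine le_trans ?_ h1
      exact_mod_cast Finset.single_le_sum (f := N) (fun _ _ => Nat.zero_le _) h0
    · refine le_trans ?_ h2
      exact_mod_cast Finset.single_le_sum (f := N) (fun _ _ => Nat.zero_le _) h0
  obtain ⟨G, hG⟩ : W.FG := IsNoetherian.noetherian W
  choose! N hN using key
  refine ⟨∑ g ∈ G, N g, fun γ h1 h2 w hw hwt => ?_⟩
  have e : w = tproj δ γ w := by
    funext t
    rw [tproj_apply, cmp_self (hwt t)]
  rw [e]
  rw [← hG] at hw
  obtain ⟨c, -, rfl⟩ := Submodule.mem_span_finset.1 hw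
  rw [map_sum]
  refine Submodule.sum_mem _ fun g hg => ?_
  have hgW : g ∈ W := by rw [← hG]; exact Submodule.subset_span hg
  refine hN g hgW γ ?_ ?_ _
  · refine le_trans ?_ h1
    exact_mod_cast Finset.single_le_sum (f := N) (fun _ _ => Nat.zero_le _) hg
  · refine le_trans ?_ h2
    exact_mod_cast Finset.single_le_sum (f := N) (fun _ _ => Nat.zero_le _) hg


lemma weight_set {n m : ℕ} (a b : ℕ) :
    {u : (Fin (n+1) ⊕ Fin (m+1)) →₀ ℕ | Finsupp.weight (wt n m) u = ((a : ℤ), (b : ℤ))} =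
      (((Finset.univ.finsuppAntidiag a) ×ˢ (Finset.univ.finsuppAntidiag b)).map
        (Finsupp.sumFinsuppEquivProdFinsupp (α := Fin (n+1)) (β := Fin (m+1)) (γ := ℕ)).symm.toEmbedding :
        Finset _) := by
  ext u
  simp only [Set.mem_ofPred_eq, weight_wt, Prod.mk.injEq, Nat.cast_inj, Finset.coe_map,
    Equiv.coe_toEmbedding, Set.mem_image, Finset.mem_coe, Finset.mem_product,
    Finset.mem_finsuppAntidiag]
  constructor
  · rintro ⟨h1, h2⟩
    refine ⟨Finsupp.sumFinsuppEquivProdFinsupp u, ⟨⟨?_, by simp⟩, ⟨?_, by simp⟩⟩, by simp⟩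
    · rw [← h1]; rfl
    · rw [← h2]; rfl
  · rintro ⟨⟨p, q⟩, ⟨⟨h1, -⟩, ⟨h2, -⟩⟩, rfl⟩
    exact ⟨by simpa using h1, by simpa using h2⟩

lemma weight_finite {n m : ℕ} (γ : ℤ × ℤ) :
    {u : (Fin (n+1) ⊕ Fin (m+1)) →₀ ℕ | Finsupp.weight (wt n m) u = γ}.Finite := by
  by_cases h : 0 ≤ γ.1 ∧ 0 ≤ γ.2
  · obtain ⟨γ1, γ2⟩ := γ
    obtain ⟨h1, h2⟩ := h
    simp only at h1 h2
    lift γ1 to ℕ using h1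
    lift γ2 to ℕ using h2
    rw [weight_set]
    exact Finset.finite_toSet _
  · convert Set.finite_empty
    rw [Set.eq_empty_iff_forall_notMem]
    intro u hu
    apply h
    rw [Set.mem_ofPred_eq, weight_wt] at hu
    rw [← hu]
    constructor <;> positivity

/-- The bihomogeneous piece in coordinates. -/
def gradEquiv (k : Type) [Field k] (n m : ℕ) (γ : ℤ × ℤ) : grad k n m γ ≃ₗ[k]
    ({u : (Fin (n+1) ⊕ Fin (m+1)) →₀ ℕ | Finsupp.weight (wt n m) u = γ} →₀ k) :=
  (LinearEquiv.ofEq _ _ (weightedHomogeneousSubmodule_eq_finsupp_supported k (wt n m) γ)).trans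
    (AddMonoidAlgebra.supportedEquivFinsupp _)

instance grad_finite (k : Type) [Field k] (n m : ℕ) (γ : ℤ × ℤ) :
    Module.Finite k (grad k n m γ) := by
  have := (weight_finite (n := n) (m := m) γ).to_subtype
  exact Module.Finite.equiv (gradEquiv k n m γ).symm

lemma finrank_grad (k : Type) [Field k] (n m a b : ℕ) :
    Module.finrank k (grad k n m ((a : ℤ), (b : ℤ))) = (a + n).choose n * (b + m).choose m := by
  have := (weight_finite (n := n) (m := m) ((a : ℤ), (b : ℤ))).fintype
  rw [(gradEquiv k n m _).finrank_eq, Module.finrank_finsupp_self, ← Nat.card_eq_fintype_card,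
    weight_set, Nat.card_eq_fintype_card]
  simp only [Finset.coe_sort_coe, Fintype.card_coe, Finset.card_map, Finset.card_product,
    Finset.card_finsuppAntidiag_nat_eq_choose, Finset.card_univ, Fintype.card_fin]
  congr 1
  · rw [show n + 1 + a - 1 = a + n by omega, ← Nat.choose_symm_add]
  · rw [show m + 1 + b - 1 = b + m by omega, ← Nat.choose_symm_add]

lemma finrank_map_add {k E F : Type} [Field k] [AddCommGroup E] [Module k E] [AddCommGroup F]
    [Module k F] (V : Submodule k E) [Module.Finite k V] (L : E →ₗ[k] F) :
    Module.finrank k (V.map L) + Module.finrank k (V ⊓ LinearMap.ker L : Submodule k E)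
      = Module.finrank k V := by
  rw [← LinearMap.finrank_range_add_finrank_ker (L.domRestrict V), LinearMap.range_domRestrict,
    LinearMap.ker_domRestrict]
  congr 1
  rw [← Submodule.finrank_map_subtype_eq, Submodule.map_comap_subtype]

lemma finrank_pi_sub {k E ι : Type} [Field k] [AddCommGroup E] [Module k E] [Fintype ι]
    (p : ι → Submodule k E) [∀ i, Module.Finite k (p i)] :
    Module.Finite k (Submodule.pi Set.univ p) ∧
    Module.finrank k (Submodule.pi Set.univ p) = ∑ i, Module.finrank k (p i) := by
  let ee : (Submodule.pi Set.univ p) ≃ₗ[k] (∀ i, p i) :=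
    { toFun := fun a i => ⟨a.1 i, a.2 i trivial⟩
      invFun := fun b => ⟨fun i => b i, fun i _ => (b i).2⟩
      map_add' := fun _ _ => rfl
      map_smul' := fun _ _ => rfl
      left_inv := fun _ => rfl
      right_inv := fun _ => rfl }
  exact ⟨Module.Finite.equiv ee.symm, by rw [ee.finrank_eq, Module.finrank_pi_fintype]⟩


/-- Twists of the Koszul complex. -/
def kdel {k : Type} [Field k] {n m r : ℕ} {f : Fin r → PolyS k n m} {d e : Fin r → ℕ}
    (K : KosM k n m r f d e) (t : K.ι) : ℤ × ℤ := ((K.da t : ℤ), (K.db t : ℤ))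

/-- The differential as a `k`-linear map. -/
def kML {k : Type} [Field k] {n m r : ℕ} {f : Fin r → PolyS k n m} {d e : Fin r → ℕ}
    (K : KosM k n m r f d e) : (K.ι → PolyS k n m) →ₗ[k] (K.ι → PolyS k n m) :=
  K.M.mulVecLin.restrictScalars k

lemma kML_apply {k : Type} [Field k] {n m r : ℕ} {f : Fin r → PolyS k n m} {d e : Fin r → ℕ}
    (K : KosM k n m r f d e) (a : K.ι → PolyS k n m) : kML K a = K.M.mulVec a := rfl

open Classical in
/-- Bihomogeneous piece of the `q`-th term of the Koszul complex. -/
def Vp {k : Type} [Field k] {n m r : ℕ} {f : Fin r → PolyS k n m} {d e : Fin r → ℕ}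
    (K : KosM k n m r f d e) (γ : ℤ × ℤ) (q : ℕ) : Submodule k (K.ι → PolyS k n m) :=
  Submodule.pi Set.univ fun t => if K.deg t = q then grad k n m (γ - kdel K t) else ⊥

/-- Cycles. -/
def Zp {k : Type} [Field k] {n m r : ℕ} {f : Fin r → PolyS k n m} {d e : Fin r → ℕ}
    (K : KosM k n m r f d e) (J : Ideal (PolyS k n m)) (γ : ℤ × ℤ) (q : ℕ) :
    Submodule k (K.ι → PolyS k n m) :=
  if q = 0 then Vp K γ q ⊓ (J.restrictScalars k).comap (LinearMap.proj K.z)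
  else Vp K γ q ⊓ LinearMap.ker (kML K)

lemma mem_Vp {k : Type} [Field k] {n m r : ℕ} {f : Fin r → PolyS k n m} {d e : Fin r → ℕ}
    (K : KosM k n m r f d e) (γ : ℤ × ℤ) (q : ℕ) (a : K.ι → PolyS k n m) :
    a ∈ Vp K γ q ↔ (∀ t, a t ∈ grad k n m (γ - kdel K t)) ∧ ∀ t, K.deg t ≠ q → a t = 0 := by
  simp only [Vp, Submodule.mem_pi, Set.mem_univ, true_imp_iff]
  constructor
  · intro h
    refine ⟨fun t => ?_, fun t ht => ?_⟩
    · have := h t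
      split_ifs at this with h1
      · exact this
      · rw [(Submodule.mem_bot k).1 this]; exact Submodule.zero_mem _
    · have := h t
      rw [if_neg ht] at this
      exact (Submodule.mem_bot k).1 this
  · rintro ⟨h1, h2⟩ t
    split_ifs with h
    · exact h1 t
    · exact (Submodule.mem_bot k).2 (h2 t h)

lemma tproj_kML {k : Type} [Field k] {n m r : ℕ} {f : Fin r → PolyS k n m} {d e : Fin r → ℕ}
    (K : KosM k n m r f d e) (γ : ℤ × ℤ) (a : K.ι → PolyS k n m) :
    tproj (kdel K) γ (K.M.mulVec a) = K.M.mulVec (tproj (kdel K) γ a) := by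
  funext s
  rw [tproj_apply, Matrix.mulVec, dotProduct, map_sum, Matrix.mulVec, dotProduct]
  refine Finset.sum_congr rfl fun t _ => ?_
  rw [cmp_mul (K.Mhom s t), tproj_apply]
  congr 3
  simp [kdel, Prod.ext_iff]

open Classical in
lemma rest_kML {k : Type} [Field k] {n m r : ℕ} {f : Fin r → PolyS k n m} {d e : Fin r → ℕ}
    (K : KosM k n m r f d e) (q : ℕ) (a : K.ι → PolyS k n m) :
    K.M.mulVec (fun t => if K.deg t = q + 1 then a t else 0) =
      fun t => if K.deg t = q then K.M.mulVec a t else 0 := by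
  funext s
  simp only [Matrix.mulVec, dotProduct]
  split_ifs with h
  · refine Finset.sum_congr rfl fun t _ => ?_
    split_ifs with h1
    · rfl
    · rw [K.Mdeg s t (by omega), zero_mul, zero_mul]
  · refine Finset.sum_eq_zero fun t _ => ?_
    split_ifs with h1
    · rw [K.Mdeg s t (by omega), zero_mul]
    · rw [mul_zero]

/-- The cycles with no grading condition. -/
def Wq {k : Type} [Field k] {n m r : ℕ} {f : Fin r → PolyS k n m} {d e : Fin r → ℕ}
    (K : KosM k n m r f d e) (J : Ideal (PolyS k n m)) (q : ℕ) :
    Submodule (PolyS k n m) (K.ι → PolyS k n m) :=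
  (⨅ t : {t // K.deg t ≠ q}, LinearMap.ker (LinearMap.proj t.1)) ⊓
    (if q = 0 then Submodule.comap (LinearMap.proj K.z) J else LinearMap.ker K.M.mulVecLin)

lemma mem_Wq {k : Type} [Field k] {n m r : ℕ} {f : Fin r → PolyS k n m} {d e : Fin r → ℕ}
    (K : KosM k n m r f d e) (J : Ideal (PolyS k n m)) (q : ℕ) (a : K.ι → PolyS k n m) :
    a ∈ Wq K J q ↔ (∀ t, K.deg t ≠ q → a t = 0) ∧
      (if q = 0 then a K.z ∈ J else K.M.mulVec a = 0) := by
  rw [Wq, Submodule.mem_inf, Submodule.mem_iInf]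
  refine and_congr (by simp) ?_
  split_ifs
  · rfl
  · rfl

lemma mem_Zp {k : Type} [Field k] {n m r : ℕ} {f : Fin r → PolyS k n m} {d e : Fin r → ℕ}
    (K : KosM k n m r f d e) (J : Ideal (PolyS k n m)) (γ : ℤ × ℤ) (q : ℕ)
    (a : K.ι → PolyS k n m) :
    a ∈ Zp K J γ q ↔ (∀ t, a t ∈ grad k n m (γ - kdel K t)) ∧ a ∈ Wq K J q := by
  rw [mem_Wq, ← and_assoc, ← mem_Vp, Zp]
  split_ifs
  · rfl
  · rfl

lemma z_span {k : Type} [Field k] {n m r : ℕ} {f : Fin r → PolyS k n m} {d e : Fin r → ℕ}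
    (K : KosM k n m r f d e) (a : K.ι → PolyS k n m) (ha : ∀ t, K.deg t ≠ 0 → a t = 0)
    (hz : a K.z ∈ Ideal.span (Set.range f)) : ∃ b, a = K.M.mulVec b := by
  obtain ⟨H, hH, -⟩ := K.hom _ hz
  refine ⟨H.mulVec (Pi.single K.z 1), ?_⟩
  have h0 : K.M.mulVec (Pi.single K.z 1) = 0 := by
    funext s
    rw [Matrix.mulVec_single_one, Matrix.col_apply, Pi.zero_apply]
    exact K.Mdeg _ _ (by rw [K.zdeg]; omega)
  have h1 := congrArg (fun A : Matrix _ _ _ => A.mulVec (Pi.single K.z 1)) hH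
  simp only [Matrix.add_mulVec, ← Matrix.mulVec_mulVec, h0, Matrix.mulVec_zero, add_zero,
    Matrix.smul_mulVec, Matrix.one_mulVec] at h1
  rw [h1]
  funext t
  by_cases h : t = K.z
  · subst h; simp
  · rw [ha t (fun h' => h (K.zuniq t h'))]
    simp [h]

lemma exact_large {k : Type} [Field k] {n m : ℕ} {f : Fin (n+m) → PolyS k n m}
    {d e : Fin (n+m) → ℕ} (hf : ∀ i, f i ∈ grad k n m ((d i : ℤ), (e i : ℤ)))
    (J : Ideal (PolyS k n m)) (hJ : J = satIdeal (Ideal.span (Set.range f)) (Birr k n m))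
    (hdim : ringKrullDim (PolyS k n m ⧸ J) ≤ 2)
    (K : KosM k n m (n+m) f d e) :
    ∃ N0 : ℕ, ∀ γ : ℤ × ℤ, (N0 : ℤ) ≤ γ.1 → (N0 : ℤ) ≤ γ.2 → ∀ q,
      (Vp K γ (q + 1)).map (kML K) = Zp K J γ q := by
  subst hJ
  set J := satIdeal (Ideal.span (Set.range f)) (Birr k n m) with hJ
  have h1 : ∀ q, ∃ N0 : ℕ, ∀ γ : ℤ × ℤ, (N0 : ℤ) ≤ γ.1 → (N0 : ℤ) ≤ γ.2 →
      ∀ w ∈ Wq K J q, (∀ t, w t ∈ grad k n m (γ - kdel K t)) →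
        w ∈ LinearMap.range K.M.mulVecLin := by
    intro q
    refine large_degree (kdel K) (Wq K J q) (LinearMap.range K.M.mulVecLin) ?_ ?_
    · intro γ w hw
      rw [mem_Wq] at hw ⊢
      refine ⟨fun t ht => by rw [tproj_apply, hw.1 t ht, map_zero], ?_⟩
      have := hw.2
      split_ifs at this ⊢ with h
      · exact sat_cmp hf _ this
      · rw [← tproj_kML, this, map_zero]
    · intro w hw i j
      rw [mem_Wq] at hw
      obtain ⟨hw1, hw2⟩ := hw
      split_ifs at hw2 with h
      · subst h
        obtain ⟨N, hN⟩ := mem_sat.1 hw2 i j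
        refine ⟨N, ?_⟩
        obtain ⟨b, hb⟩ := z_span K (uu k i j ^ N • w) (fun t ht => by simp [hw1 t ht]) hN
        exact ⟨b, hb.symm⟩
      · obtain ⟨N, b, hb⟩ := acyclic_chart hf hdim K i j q (by omega) w hw1 hw2
        exact ⟨N, b, hb.symm⟩
  choose N hN using h1
  refine ⟨∑ q ∈ Finset.range (n + m + 1), N q, fun γ g1 g2 q => ?_⟩
  ext a
  constructor
  · rintro ⟨b, hb, rfl⟩
    rw [SetLike.mem_coe, mem_Vp] at hb
    obtain ⟨hb1, hb2⟩ := hb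
    rw [mem_Zp, mem_Wq, kML_apply]
    refine ⟨fun s => ?_, fun s hs => ?_, ?_⟩
    · have e : b = tproj (kdel K) γ b := by
        funext t; rw [tproj_apply, cmp_self (hb1 t)]
      rw [e, ← tproj_kML]
      exact cmp_mem _ _
    · rw [Matrix.mulVec, dotProduct]
      refine Finset.sum_eq_zero fun t _ => ?_
      by_cases h : K.deg t = q + 1
      · rw [K.Mdeg s t (by omega), zero_mul]
      · rw [hb2 t h, mul_zero]
    · split_ifs with h
      · apply le_sat
        rw [Matrix.mulVec, dotProduct]
        exact Ideal.sum_mem _ fun t _ => Ideal.mul_mem_right _ _ (K.row t)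
      · rw [Matrix.mulVec_mulVec, K.MM, Matrix.zero_mulVec]
  · rw [mem_Zp]
    rintro ⟨ha1, ha2⟩
    have hr : a ∈ LinearMap.range K.M.mulVecLin := by
      by_cases hq : q ≤ n + m
      · have : N q ≤ ∑ q ∈ Finset.range (n + m + 1), N q :=
          Finset.single_le_sum (f := N) (fun _ _ => Nat.zero_le _)
            (Finset.mem_range.2 (by omega))
        exact hN q γ (by omega) (by omega) a ha2 ha1
      · have : a = 0 := by
          funext t
          exact ((mem_Wq K J q a).1 ha2).1 t (by have := K.degle t; omega)
        rw [this]; exact Submodule.zero_mem _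
    obtain ⟨b, hb⟩ := hr
    classical
    refine ⟨fun t => if K.deg t = q + 1 then tproj (kdel K) γ b t else 0, ?_, ?_⟩
    · rw [SetLike.mem_coe, mem_Vp]
      refine ⟨fun t => ?_, fun t ht => by simp [ht]⟩
      split_ifs
      · exact cmp_mem _ _
      · exact Submodule.zero_mem _
    · have hb' : K.M.mulVec b = a := hb
      rw [kML_apply]
      have := rest_kML K q (tproj (kdel K) γ b)
      rw [← tproj_kML, hb'] at this
      convert this using 1
      funext t
      split_ifs with h
      · rw [tproj_apply, cmp_self (ha1 t)]
      · exact ((mem_Wq K J q a).1 ha2).1 t h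


lemma Vp_finite {k : Type} [Field k] {n m r : ℕ} {f : Fin r → PolyS k n m} {d e : Fin r → ℕ}
    (K : KosM k n m r f d e) (γ : ℤ × ℤ) (q : ℕ) : Module.Finite k (Vp K γ q) ∧
    Module.finrank k (Vp K γ q) =
      ∑ t, if K.deg t = q then Module.finrank k (grad k n m (γ - kdel K t)) else 0 := by
  classical
  have hfin : ∀ t, Module.Finite k
      (if K.deg t = q then grad k n m (γ - kdel K t) else ⊥ : Submodule k (PolyS k n m)) := by
    intro t
    by_cases h : K.deg t = q
    · rw [if_pos h]; infer_instance
    · rw [if_neg h]; infer_instance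
  have h1 := finrank_pi_sub (k := k) (fun t => if K.deg t = q then grad k n m (γ - kdel K t) else ⊥)
  have h2 : (∑ t, Module.finrank k
      (if K.deg t = q then grad k n m (γ - kdel K t) else ⊥ : Submodule k (PolyS k n m))) =
      ∑ t, if K.deg t = q then Module.finrank k (grad k n m (γ - kdel K t)) else 0 := by
    refine Finset.sum_congr rfl fun t _ => ?_
    by_cases h : K.deg t = q
    · rw [if_pos h, if_pos h]
    · rw [if_neg h, if_neg h, finrank_bot]
  rw [h2] at h1
  exact h1

lemma Z_zero {k : Type} [Field k] {n m r : ℕ} {f : Fin r → PolyS k n m} {d e : Fin r → ℕ}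
    (K : KosM k n m r f d e) (J : Ideal (PolyS k n m)) (γ : ℤ × ℤ) :
    HFq k n m J γ + Module.finrank k (Zp K J γ 0) = Module.finrank k (Vp K γ 0) := by
  have := (Vp_finite K γ 0).1
  set L : (K.ι → PolyS k n m) →ₗ[k] (PolyS k n m ⧸ J) :=
    (Ideal.Quotient.mkₐ k J).toLinearMap.comp (LinearMap.proj K.z) with hL
  rw [← finrank_map_add (Vp K γ 0) L, HFq, quotPiece]
  have hz : γ - kdel K K.z = γ := by simp [kdel, K.zda, K.zdb]
  have e1 : (Vp K γ 0).map (LinearMap.proj K.z : (K.ι → PolyS k n m) →ₗ[k] PolyS k n m)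
      = grad k n m γ := by
    ext a
    constructor
    · rintro ⟨b, hb, rfl⟩
      rw [SetLike.mem_coe, mem_Vp] at hb
      have := hb.1 K.z
      rwa [hz] at this
    · intro ha
      refine ⟨Pi.single K.z a, ?_, by simp⟩
      rw [SetLike.mem_coe, mem_Vp]
      constructor
      · intro t
        by_cases h : t = K.z
        · subst h; rw [hz]; simpa using ha
        · rw [Pi.single_eq_of_ne h]; exact Submodule.zero_mem _
      · intro t ht
        rw [Pi.single_eq_of_ne]
        rintro rfl
        exact ht K.zdeg
  have e2 : Zp K J γ 0 = Vp K γ 0 ⊓ LinearMap.ker L := by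
    unfold Zp
    rw [if_pos rfl]
    congr 1
    ext a
    change a K.z ∈ J ↔ Ideal.Quotient.mk J (a K.z) = 0
    rw [Ideal.Quotient.eq_zero_iff_mem]
  rw [e2, hL, Submodule.map_comp, e1]

lemma hf_sum {k : Type} [Field k] {n m : ℕ} {f : Fin (n+m) → PolyS k n m}
    {d e : Fin (n+m) → ℕ} (hf : ∀ i, f i ∈ grad k n m ((d i : ℤ), (e i : ℤ)))
    (J : Ideal (PolyS k n m)) (hJ : J = satIdeal (Ideal.span (Set.range f)) (Birr k n m))
    (hdim : ringKrullDim (PolyS k n m ⧸ J) ≤ 2)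
    (K : KosM k n m (n+m) f d e) :
    ∃ N0 : ℕ, ∀ γ : ℤ × ℤ, (N0 : ℤ) ≤ γ.1 → (N0 : ℤ) ≤ γ.2 →
      (HFq k n m J γ : ℤ) =
        ∑ t, (-1) ^ K.deg t * (Module.finrank k (grad k n m (γ - kdel K t)) : ℤ) := by
  obtain ⟨N0, hN0⟩ := exact_large hf J hJ hdim K
  refine ⟨N0, fun γ h1 h2 => ?_⟩
  have hex := hN0 γ h1 h2
  have hstep : ∀ q, Module.finrank k (Vp K γ (q+1)) =
      Module.finrank k (Zp K J γ q) + Module.finrank k (Zp K J γ (q+1)) := by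
    intro q
    have := (Vp_finite K γ (q+1)).1
    rw [← finrank_map_add (Vp K γ (q+1)) (kML K), hex q]
    congr 2
  have h0 := Z_zero K J γ
  have htel : ∀ Q : ℕ, ∑ q ∈ Finset.range (Q + 1), (-1 : ℤ) ^ q * Module.finrank k (Vp K γ q) =
      HFq k n m J γ + (-1) ^ Q * Module.finrank k (Zp K J γ Q) := by
    intro Q
    induction Q with
    | zero => simp [← h0]
    | succ Q ih =>
      rw [Finset.sum_range_succ, ih, hstep Q]
      push_cast
      ring
  have hlast : Module.finrank k (Zp K J γ (n + m)) = 0 := by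
    have h3 := hstep (n + m)
    rw [(Vp_finite K γ _).2, Finset.sum_eq_zero] at h3
    · omega
    · intro t _
      rw [if_neg]
      have := K.degle t
      omega
  have h4 := htel (n + m)
  rw [hlast] at h4
  simp only [Nat.cast_zero, mul_zero, add_zero] at h4
  rw [← h4]
  simp_rw [fun q => (Vp_finite K γ q).2]
  push_cast
  simp_rw [Finset.mul_sum]
  rw [Finset.sum_comm]
  refine Finset.sum_congr rfl fun t _ => ?_
  rw [Finset.sum_eq_single (K.deg t)]
  · simp
  · intro q _ hq
    rw [if_neg (Ne.symm hq), mul_zero]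
  · intro h
    exact absurd (Finset.mem_range.2 (Nat.lt_succ_of_le (K.degle t))) h


/-- Shifted binomial polynomials. -/
def gch : ℕ → ℤ → ℤ
  | 0, _ => 0
  | (n+1), x => Ring.choose (x + n) n

lemma gch_sub (p : ℕ) (x : ℤ) : gch p x - gch p (x - 1) = gch (p - 1) x := by
  match p with
  | 0 => simp [gch]
  | 1 => simp [gch]
  | (p + 2) =>
    simp only [gch]
    have h := Ring.choose_succ_succ (x + (p:ℤ)) p
    have e1 : x + ((p + 1 : ℕ) : ℤ) = x + p + 1 := by push_cast; ring
    have e2 : x - 1 + ((p + 1 : ℕ) : ℤ) = x + p := by push_cast; ring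
    rw [e1, e2, h]
    have : (p + 2 - 1) = p + 1 := rfl
    rw [this]
    simp

/-- The functional extracting Hilbert function values from a Hilbert numerator. -/
def Phi (p q : ℕ) (γ : ℤ × ℤ) : MvPolynomial (Fin 2) ℤ →ₗ[ℤ] ℤ :=
  (basisMonomials (Fin 2) ℤ).constr ℤ fun u => gch p (γ.1 - u 0) * gch q (γ.2 - u 1)

lemma Phi_monomial (p q : ℕ) (γ : ℤ × ℤ) (u : Fin 2 →₀ ℕ) (c : ℤ) :
    Phi p q γ (monomial u c) = c * (gch p (γ.1 - u 0) * gch q (γ.2 - u 1)) := by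
  have : (monomial u c : MvPolynomial (Fin 2) ℤ) = c • basisMonomials (Fin 2) ℤ u := by
    simp [smul_monomial]
  rw [this, map_smul, Phi, Module.Basis.constr_basis, smul_eq_mul]

lemma Phi_A (p q : ℕ) (γ : ℤ × ℤ) (w : MvPolynomial (Fin 2) ℤ) :
    Phi p q γ ((1 - X 0) * w) = Phi (p - 1) q γ w := by
  induction w using MvPolynomial.induction_on' with
  | add a b ha hb => rw [mul_add, map_add, ha, hb, map_add]
  | monomial u c =>
    have : (X 0 * monomial u c : MvPolynomial (Fin 2) ℤ) = monomial (Finsupp.single 0 1 + u) c := by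
      rw [X, monomial_mul, one_mul]
    rw [sub_mul, one_mul, map_sub, this, Phi_monomial, Phi_monomial, Phi_monomial, ← gch_sub p]
    simp only [Finsupp.add_apply, Finsupp.single_eq_same, Finsupp.single_apply]
    push_cast
    rw [show γ.1 - (1 + (u 0 : ℤ)) = γ.1 - u 0 - 1 by ring]
    simp
    ring

lemma Phi_B (p q : ℕ) (γ : ℤ × ℤ) (w : MvPolynomial (Fin 2) ℤ) :
    Phi p q γ ((1 - X 1) * w) = Phi p (q - 1) γ w := by
  induction w using MvPolynomial.induction_on' with
  | add a b ha hb => rw [mul_add, map_add, ha, hb, map_add]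
  | monomial u c =>
    have : (X 1 * monomial u c : MvPolynomial (Fin 2) ℤ) = monomial (Finsupp.single 1 1 + u) c := by
      rw [X, monomial_mul, one_mul]
    rw [sub_mul, one_mul, map_sub, this, Phi_monomial, Phi_monomial, Phi_monomial, ← gch_sub q]
    simp only [Finsupp.add_apply, Finsupp.single_eq_same, Finsupp.single_apply]
    push_cast
    rw [show γ.2 - (1 + (u 1 : ℤ)) = γ.2 - u 1 - 1 by ring]
    simp
    ring

lemma Phi_AB (p q i j : ℕ) (γ : ℤ × ℤ) (w : MvPolynomial (Fin 2) ℤ) :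
    Phi p q γ ((1 - X 0) ^ i * (1 - X 1) ^ j * w) = Phi (p - i) (q - j) γ w := by
  induction i generalizing p with
  | zero =>
    induction j generalizing q with
    | zero => simp
    | succ j ih =>
      rw [pow_succ', pow_zero, one_mul, mul_assoc, Phi_B]
      have := ih (q - 1)
      rw [pow_zero, one_mul] at this
      rw [this]
      congr 2
      omega
  | succ i ih =>
    rw [pow_succ', mul_assoc, mul_assoc, Phi_A, ← mul_assoc, ih]
    congr 2
    omega

lemma Phi_zero (p q : ℕ) (γ : ℤ × ℤ) (h : p = 0 ∨ q = 0) (w : MvPolynomial (Fin 2) ℤ) :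
    Phi p q γ w = 0 := by
  induction w using MvPolynomial.induction_on' with
  | add a b ha hb => rw [map_add, ha, hb, add_zero]
  | monomial u c =>
    rw [Phi_monomial]
    rcases h with rfl | rfl <;> simp [gch]

lemma Phi_one (γ : ℤ × ℤ) (w : MvPolynomial (Fin 2) ℤ) :
    Phi 1 1 γ w = eval (fun _ => 1) w := by
  induction w using MvPolynomial.induction_on' with
  | add a b ha hb => rw [map_add, ha, hb, map_add]
  | monomial u c =>
    rw [Phi_monomial]
    simp [gch, eval_monomial]

lemma Phi_prod (n m : ℕ) (d e : Fin (n + m) → ℕ) (γ : ℤ × ℤ) :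
    Phi (n + 1) (m + 1) γ (∏ i, (1 - X 0 ^ d i * X 1 ^ e i)) =
      ((∑ T ∈ Finset.powersetCard n (Finset.univ : Finset (Fin (n + m))),
          (∏ i ∈ T, d i) * ∏ i ∈ Finset.univ \ T, e i : ℕ) : ℤ) := by
  have h1 : ∀ i, (1 - X 0 ^ d i * X 1 ^ e i : MvPolynomial (Fin 2) ℤ) =
      (1 - X 0) * (∑ a ∈ Finset.range (d i), X 0 ^ a) +
        (1 - X 1) * (X 0 ^ d i * ∑ a ∈ Finset.range (e i), X 1 ^ a) := by
    intro i
    rw [mul_left_comm, mul_neg_geom_sum, mul_neg_geom_sum]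
    ring
  simp_rw [h1]
  rw [Finset.prod_add, map_sum, Finset.powersetCard_eq_filter, Finset.sum_filter]
  push_cast
  refine Finset.sum_congr rfl fun T hT => ?_
  rw [Finset.prod_mul_distrib, Finset.prod_mul_distrib, Finset.prod_const, Finset.prod_const,
    mul_mul_mul_comm, Phi_AB]
  have hcard : (Finset.univ \ T).card + T.card = n + m := by
    rw [Finset.card_sdiff_add_card_eq_card (Finset.subset_univ T)]; simp
  by_cases h : T.card = n
  · rw [if_pos h, show n + 1 - T.card = 1 by omega,
      show m + 1 - (Finset.univ \ T).card = 1 by omega, Phi_one]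
    simp [map_prod]
  · rw [if_neg h, Phi_zero]
    omega

lemma hf_value {k : Type} [Field k] {n m : ℕ} {f : Fin (n+m) → PolyS k n m}
    {d e : Fin (n+m) → ℕ} (K : KosM k n m (n+m) f d e) :
    ∃ N0 : ℕ, ∀ γ : ℤ × ℤ, (N0 : ℤ) ≤ γ.1 → (N0 : ℤ) ≤ γ.2 →
      ∑ t, (-1) ^ K.deg t * (Module.finrank k (grad k n m (γ - kdel K t)) : ℤ) =
      ((∑ T ∈ Finset.powersetCard n (Finset.univ : Finset (Fin (n + m))),
          (∏ i ∈ T, d i) * ∏ i ∈ Finset.univ \ T, e i : ℕ) : ℤ) := by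
  refine ⟨∑ t, (K.da t + K.db t), fun γ h1 h2 => ?_⟩
  rw [← Phi_prod n m d e γ, ← K.euler, map_sum]
  refine Finset.sum_congr rfl fun t _ => ?_
  have hle : K.da t + K.db t ≤ ∑ t, (K.da t + K.db t) :=
    Finset.single_le_sum (f := fun t => K.da t + K.db t) (fun _ _ => Nat.zero_le _)
      (Finset.mem_univ t)
  obtain ⟨a, ha⟩ := Int.eq_ofNat_of_zero_le (show 0 ≤ γ.1 - K.da t by omega)
  obtain ⟨b, hb⟩ := Int.eq_ofNat_of_zero_le (show 0 ≤ γ.2 - K.db t by omega)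
  have e1 : γ - kdel K t = ((a : ℤ), (b : ℤ)) := by
    rw [← ha, ← hb]; rfl
  have e2 : ((-1) ^ K.deg t * (X 0 ^ K.da t * X 1 ^ K.db t) : MvPolynomial (Fin 2) ℤ) =
      monomial (Finsupp.single 0 (K.da t) + Finsupp.single 1 (K.db t)) ((-1) ^ K.deg t) := by
    rw [X_pow_eq_monomial, X_pow_eq_monomial, monomial_mul, one_mul,
      ← mul_one ((-1 : ℤ) ^ K.deg t), ← C_mul_monomial]
    simp
  rw [e1, finrank_grad, e2, Phi_monomial]
  congr 1
  have e3 : (Finsupp.single 0 (K.da t) + Finsupp.single 1 (K.db t) : Fin 2 →₀ ℕ) 0 = K.da t := by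
    simp
  have e4 : (Finsupp.single 0 (K.da t) + Finsupp.single 1 (K.db t) : Fin 2 →₀ ℕ) 1 = K.db t := by
    simp
  rw [e3, e4, ha, hb]
  simp only [gch]
  rw [Nat.cast_mul, ← Ring.choose_natCast, ← Ring.choose_natCast, Nat.cast_add, Nat.cast_add]


theorem stmt2 (k : Type) [Field k] (n m : ℕ) (d e : Fin (n + m) → ℕ)
    (f : Fin (n + m) → PolyS k n m)
    (hf : ∀ i, f i ∈ grad k n m ((d i : ℤ), (e i : ℤ)))
    (I : Ideal (PolyS k n m)) (hI : I = Ideal.span (Set.range f))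
    (hci : CodimEq k n m I (n + m)) :
    (∃ N : ℕ, ∀ γ : ℤ × ℤ, (N : ℤ) ≤ γ.1 → (N : ℤ) ≤ γ.2 →
      HFV k n m I γ =
        ∑ T ∈ Finset.powersetCard n (Finset.univ : Finset (Fin (n + m))),
          (∏ i ∈ T, d i) * ∏ i ∈ Finset.univ \ T, e i) ∧
    (∀ d0 e0 : ℕ, (∀ i, d i = d0) → (∀ i, e i = e0) →
      (∑ T ∈ Finset.powersetCard n (Finset.univ : Finset (Fin (n + m))),
          (∏ i ∈ T, d i) * ∏ i ∈ Finset.univ \ T, e i) =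
        Nat.choose (n + m) n * d0 ^ n * e0 ^ m) := by
  subst hI
  refine ⟨?_, ?_⟩
  · obtain ⟨K⟩ := exists_kos k n m (n + m) f d e hf
    have hdim : ringKrullDim (PolyS k n m ⧸ satIdeal (Ideal.span (Set.range f)) (Birr k n m)) ≤ 2 := by
      rw [CodimEq] at hci
      rw [hci, show n + m + 2 - (n + m) = 2 by omega]
      rfl
    obtain ⟨N1, h1⟩ := hf_sum hf _ rfl hdim K
    obtain ⟨N2, h2⟩ := hf_value K
    refine ⟨N1 + N2, fun γ g1 g2 => ?_⟩
    push_cast at g1 g2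
    have e1 := h1 γ (by omega) (by omega)
    rw [h2 γ (by omega) (by omega)] at e1
    exact_mod_cast e1
  · intro d0 e0 hd he
    have h : ∀ T ∈ Finset.powersetCard n (Finset.univ : Finset (Fin (n + m))),
        ((∏ i ∈ T, d i) * ∏ i ∈ Finset.univ \ T, e i) = d0 ^ n * e0 ^ m := by
      intro T hT
      have hT' := (Finset.mem_powersetCard.1 hT).2
      have hcard : (Finset.univ \ T).card + T.card = n + m := by
        rw [Finset.card_sdiff_add_card_eq_card (Finset.subset_univ T)]; simp
      rw [Finset.prod_congr rfl (fun i _ => hd i), Finset.prod_congr rfl (fun i _ => he i),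
        Finset.prod_const, Finset.prod_const, hT', show (Finset.univ \ T).card = m by omega]
    rw [Finset.sum_congr rfl h, Finset.sum_const, Finset.card_powersetCard]
    simp [mul_assoc]
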